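/- Consider any run of the multi-level Jefferson's method (with arbitrary tie-breaking) on a multi-level apportionment instance. Whenever a node c with parent p has just received a seat — that is, for any g ≥ 1 such that c is among the recipients of the g-th seat — the resulting allocation V^g after g seats satisfies V^g_c / R_c ≥ V^g_p / R_p. -/

import Mathlib

/-- A multi-level apportionment instance: a rooted tree on nodes `0, …, n`
(root `0`, encoded by a parent function with `parent i < i` for `i ≠ 0`),
together with entitlements `W`. -/
structure MLA where
  n : ℕ
  parent : Fin (n + 1) → Fin (n + 1)
  parent_lt : ∀ i : Fin (n + 1), i ≠ 0 → (parent i : ℕ) < (i : ℕ)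
  W : Fin (n + 1) → ℝ
  W_pos : ∀ i, 0 < W i
  W_le_one : ∀ i, W i ≤ 1
  W_root : W 0 = 1
  W_sum : ∀ i : Fin (n + 1),
    (Finset.univ.filter (fun c => c ≠ 0 ∧ parent c = i)).Nonempty →
    ∑ c ∈ Finset.univ.filter (fun c => c ≠ 0 ∧ parent c = i), W c = 1

namespace MLA

variable (T : MLA)

/-- The set of children of node `i`. -/
def children (i : Fin (T.n + 1)) : Finset (Fin (T.n + 1)) :=
  Finset.univ.filter (fun c => c ≠ 0 ∧ T.parent c = i)

/-- The ancestor set `A(i)`: `A(0) = {0}` and `A(i) = {parent i} ∪ A(parent i)`. -/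
def ancestors (i : Fin (T.n + 1)) : Finset (Fin (T.n + 1)) :=
  if h : i = 0 then {0} else insert (T.parent i) (ancestors (T.parent i))
termination_by (i : ℕ)
decreasing_by exact T.parent_lt i h

/-- The entitlement of node `i` relative to the root: `R i = ∏_{a ∈ A(i) ∪ {i}} W a`. -/
def R (i : Fin (T.n + 1)) : ℝ := ∏ a ∈ insert i (T.ancestors i), T.W a

/-- `V` is an allocation of `h` seats. -/
def IsAlloc (h : ℕ) (V : Fin (T.n + 1) → ℕ) : Prop :=
  V 0 = h ∧ ∀ i, (T.children i).Nonempty → V i = ∑ c ∈ T.children i, V c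

/-- `V` fulfills lower quota: `V i ≥ LQ i = max_{a ∈ A(i)} ⌊(R i / R a) · V a⌋`. -/
def FulfillsLowerQuota (V : Fin (T.n + 1) → ℕ) : Prop :=
  ∀ i, ∀ a ∈ T.ancestors i, ⌊T.R i / T.R a * (V a : ℝ)⌋ ≤ (V i : ℤ)

/-- `V` fulfills upper quota: `V i ≤ UQ i = min_{a ∈ A(i)} ⌈(R i / R a) · V a⌉`. -/
def FulfillsUpperQuota (V : Fin (T.n + 1) → ℕ) : Prop :=
  ∀ i, ∀ a ∈ T.ancestors i, (V i : ℤ) ≤ ⌈T.R i / T.R a * (V a : ℝ)⌉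


/-- `P` is the set of nodes receiving the new seat in one step of an iterative
method with selection criterion `crit` (to be minimized among children) and
eligibility constraint `elig`: `P` is a root-to-leaf path, each non-root node on
the path is an eligible child of its parent minimizing `crit` among all eligible
children, and the seat counts along `P` each increase by one. -/
def IsStepWith (crit : (Fin (T.n + 1) → ℕ) → Fin (T.n + 1) → ℝ)
    (elig : (Fin (T.n + 1) → ℕ) → Fin (T.n + 1) → Prop)
    (P : Finset (Fin (T.n + 1))) (Vh Vh1 : Fin (T.n + 1) → ℕ) : Prop :=
  (0 : Fin (T.n + 1)) ∈ P ∧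
  (∀ i ∈ P, i ≠ 0 → T.parent i ∈ P) ∧
  (∀ i ∈ P, (T.children i).Nonempty → ∃ c ∈ T.children i, c ∈ P) ∧
  (∀ c ∈ P, ∀ d ∈ P, c ≠ 0 → d ≠ 0 → T.parent c = T.parent d → c = d) ∧
  (∀ c ∈ P, c ≠ 0 → elig Vh c ∧
    ∀ d ∈ T.children (T.parent c), elig Vh d → crit Vh c ≤ crit Vh d) ∧
  (∀ i, Vh1 i = Vh i + if i ∈ P then 1 else 0)

/-- `V : ℕ → (nodes → ℕ)` is a run of the iterative method given by `crit` and
`elig` (with arbitrary tie-breaking): `V 0` is the all-zero allocation and each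
`V (h+1)` is obtained from `V h` by allocating one more seat along a path. -/
def IsRun (crit : (Fin (T.n + 1) → ℕ) → Fin (T.n + 1) → ℝ)
    (elig : (Fin (T.n + 1) → ℕ) → Fin (T.n + 1) → Prop)
    (V : ℕ → Fin (T.n + 1) → ℕ) : Prop :=
  (∀ i, V 0 i = 0) ∧ ∀ h, ∃ P, T.IsStepWith crit elig P (V h) (V (h + 1))

/-- Adams' criterion: a child `c` minimizing `V c / R c` receives the seat. -/
noncomputable def adamsCrit (V : Fin (T.n + 1) → ℕ) (c : Fin (T.n + 1)) : ℝ :=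
  (V c : ℝ) / T.R c

/-- Jefferson's criterion: a child `c` minimizing `(V c + 1) / R c` receives the seat. -/
noncomputable def jeffersonCrit (V : Fin (T.n + 1) → ℕ) (c : Fin (T.n + 1)) : ℝ :=
  ((V c : ℝ) + 1) / T.R c

/-- Trivial eligibility constraint: every child is eligible. -/
def trivElig (_ : Fin (T.n + 1) → ℕ) (_ : Fin (T.n + 1)) : Prop := True

/-- Eligibility constraint of the quota method: `V c / W c < V (parent c) + 1`. -/
def quotaElig (V : Fin (T.n + 1) → ℕ) (c : Fin (T.n + 1)) : Prop :=
  (V c : ℝ) / T.W c < (V (T.parent c) : ℝ) + 1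

/-- Eligibility constraint of the upper-compliant quota method:
`V c / R c < (V a + 1) / R a` for every ancestor `a` of `c`. -/
def ucElig (V : Fin (T.n + 1) → ℕ) (c : Fin (T.n + 1)) : Prop :=
  ∀ a ∈ T.ancestors c, (V c : ℝ) / T.R c < ((V a : ℝ) + 1) / T.R a

end MLA

namespace MLA

lemma ancestors_le (T : MLA) : ∀ (m : ℕ) (i : Fin (T.n + 1)), (i : ℕ) = m →
    ∀ a ∈ T.ancestors i, (a : ℕ) ≤ i := by
  intro m
  induction m using Nat.strong_induction_on with
  | _ m ih =>
    intro i hi a ha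
    rw [ancestors] at ha
    split_ifs at ha with h
    · simp at ha
      simp [ha]
    · have hlt := T.parent_lt i h
      rcases Finset.mem_insert.1 ha with h1 | h1
      · rw [h1]; exact hlt.le
      · exact (ih _ (hi ▸ hlt) _ rfl a h1).trans hlt.le

lemma R_pos (T : MLA) (i : Fin (T.n + 1)) : 0 < T.R i :=
  Finset.prod_pos fun a _ => T.W_pos a

lemma R_child (T : MLA) (c : Fin (T.n + 1)) (hc : c ≠ 0) :
    T.R c = T.W c * T.R (T.parent c) := by
  have hanc : T.ancestors c = insert (T.parent c) (T.ancestors (T.parent c)) := by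
    rw [ancestors, dif_neg hc]
  have hlt := T.parent_lt c hc
  unfold R
  rw [hanc, Finset.prod_insert]
  intro hmem
  rcases Finset.mem_insert.1 hmem with h1 | h1
  · have := congrArg Fin.val h1
    omega
  · have := ancestors_le T _ _ rfl c h1
    omega

lemma sum_R (T : MLA) (p : Fin (T.n + 1)) (hp : (T.children p).Nonempty) :
    ∑ d ∈ T.children p, T.R d = T.R p := by
  have h1 : ∑ d ∈ T.children p, T.R d = ∑ d ∈ T.children p, T.W d * T.R p := by
    refine Finset.sum_congr rfl fun d hd => ?_
    obtain ⟨h0, h2⟩ := (Finset.mem_filter.1 hd).2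
    rw [R_child T d h0, h2]
  have h3 : ∑ d ∈ T.children p, T.W d = 1 := T.W_sum p hp
  rw [h1, ← Finset.sum_mul, h3, one_mul]

lemma step_sum (T : MLA) {crit elig P Vh Vh1} (hP : T.IsStepWith crit elig P Vh Vh1)
    (p : Fin (T.n + 1)) (hp : (T.children p).Nonempty)
    (h : Vh p = ∑ d ∈ T.children p, Vh d) : Vh1 p = ∑ d ∈ T.children p, Vh1 d := by
  obtain ⟨-, hpar, hch, huniq, -, hV⟩ := hP
  have : ∑ d ∈ T.children p, (if d ∈ P then 1 else 0) = if p ∈ P then 1 else 0 := by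
    split_ifs with hpP
    · obtain ⟨c, hc, hcP⟩ := hch p hpP hp
      obtain ⟨hc0, hcp⟩ := (Finset.mem_filter.1 hc).2
      rw [Finset.sum_eq_single_of_mem c hc, if_pos hcP]
      intro d hd hdc
      obtain ⟨hd0, hdp⟩ := (Finset.mem_filter.1 hd).2
      exact if_neg fun hdP => hdc (huniq d hdP c hcP hd0 hc0 (hdp.trans hcp.symm))
    · refine Finset.sum_eq_zero fun d hd => ?_
      obtain ⟨hd0, hdp⟩ := (Finset.mem_filter.1 hd).2
      exact if_neg fun hdP => hpP (hdp ▸ hpar d hdP hd0)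
  simp only [hV]
  rw [Finset.sum_add_distrib, this, h]

lemma run_sum (T : MLA) {crit elig V} (hrun : T.IsRun crit elig V)
    (p : Fin (T.n + 1)) (hp : (T.children p).Nonempty) (h : ℕ) :
    V h p = ∑ d ∈ T.children p, V h d := by
  induction h with
  | zero => simp [hrun.1]
  | succ k ih =>
    obtain ⟨P, hP⟩ := hrun.2 k
    exact step_sum T hP p hp ih

lemma run_ratio (T : MLA) {V} (hrun : T.IsRun T.jeffersonCrit T.trivElig V)
    (c d : Fin (T.n + 1)) (hc : c ≠ 0) (hd : d ≠ 0) (hcd : T.parent c = T.parent d) (h : ℕ) :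
    (V h d : ℝ) / T.R d ≤ ((V h c : ℝ) + 1) / T.R c := by
  have hRc := T.R_pos c
  induction h with
  | zero =>
    simp only [hrun.1]
    simp
    exact hRc.le
  | succ k ih =>
    obtain ⟨P, -, -, -, -, hmin, hV⟩ := hrun.2 k
    have hmono : ((V k c : ℝ) + 1) / T.R c ≤ ((V (k + 1) c : ℝ) + 1) / T.R c := by
      have : V k c ≤ V (k + 1) c := by rw [hV c]; exact Nat.le_add_right _ _
      gcongr
    refine le_trans ?_ hmono
    rw [hV d]
    split_ifs with hdP
    · have := (hmin d hdP hd).2 c (Finset.mem_filter.2 ⟨Finset.mem_univ _, hc, hcd⟩) trivial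
      simpa [jeffersonCrit] using this
    · simpa using ih

end MLA

/-- In any run of the multi-level Jefferson's method, whenever
a non-root node `c` (with parent `p`) has just received the `g`-th seat (`g ≥ 1`,
`c` among the recipients `P` of that seat), the resulting allocation satisfies
`V^g_c / R_c ≥ V^g_p / R_p`. -/
theorem jefferson_just_received_ratio (T : MLA) (V : ℕ → Fin (T.n + 1) → ℕ)
    (hrun : T.IsRun T.jeffersonCrit T.trivElig V) (g : ℕ) (hg : 1 ≤ g)
    (P : Finset (Fin (T.n + 1)))
    (hP : T.IsStepWith T.jeffersonCrit T.trivElig P (V (g - 1)) (V g))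
    (c : Fin (T.n + 1)) (hc : c ∈ P) (hc0 : c ≠ 0) :
    (V g (T.parent c) : ℝ) / T.R (T.parent c) ≤ (V g c : ℝ) / T.R c := by
  have hch : c ∈ T.children (T.parent c) := Finset.mem_filter.2 ⟨Finset.mem_univ _, hc0, rfl⟩
  have hcne : (T.children (T.parent c)).Nonempty := ⟨c, hch⟩
  have hVc : V g c = V (g - 1) c + 1 := by
    rw [hP.2.2.2.2.2 c, if_pos hc]
  have key : ∀ d ∈ T.children (T.parent c), (V g d : ℝ) ≤ (V g c : ℝ) / T.R c * T.R d := by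
    intro d hd
    obtain ⟨hd0, hdp⟩ := (Finset.mem_filter.1 hd).2
    rw [← div_le_iff₀ (T.R_pos d)]
    by_cases hdP : d ∈ P
    · rw [hP.2.2.2.1 d hdP c hc hd0 hc0 hdp]
    · have h1 : V g d = V (g - 1) d := by
        rw [hP.2.2.2.2.2 d, if_neg hdP, add_zero]
      have h2 := MLA.run_ratio T hrun c d hc0 hd0 hdp.symm (g - 1)
      rw [h1, hVc]
      push_cast
      exact h2
  rw [div_le_iff₀ (T.R_pos _), MLA.run_sum T hrun _ hcne g]
  push_cast
  calc ∑ d ∈ T.children (T.parent c), (V g d : ℝ)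
      ≤ ∑ d ∈ T.children (T.parent c), (V g c : ℝ) / T.R c * T.R d := Finset.sum_le_sum key
    _ = _ := by rw [← Finset.mul_sum, MLA.sum_R T _ hcne]
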